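/- Let R̂ be the 9×9 complex matrix, with rows and columns indexed by pairs (i,j) ∈ {1,2,3}² ordered lexicographically, whose nonzero entries are: R̂^{11}_{11} = 1, R̂^{12}_{21} = q, R̂^{13}_{13} = 1−q², R̂^{13}_{31} = 1, R̂^{21}_{12} = q, R̂^{21}_{21} = 1−q², R̂^{22}_{22} = 1, R̂^{23}_{23} = 1−q², R̂^{23}_{32} = q, R̂^{31}_{13} = q², R̂^{32}_{23} = q, R̂^{33}_{33} = 1. Setting X₁ = x, X₂ = y, X₃ = θ and ∂₁ = ∂x, ∂₂ = ∂y, ∂₃ = ∂θ in the Z₃-graded quantum Weyl superalgebra W_q(2|1), the following hold for all i, j ∈ {1,2,3}: (a) ∂_i·X_j = δ_{ij}·1 + q·Σ_{k,l} R̂^{jk}_{il}·X_l·∂_k, and (b) ∂_i·∂_j = Σ_{k,l} R̂^{lk}_{ji}·∂_k·∂_l. -/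

import Mathlib

/-!
`W_q(2|1)`: the Z₃-graded quantum Weyl superalgebra, the unital associative
ℂ-algebra with generators `x`, `y`, `θ`, `∂x`, `∂y`, `∂θ`, quotient of the free
algebra by the two-sided ideal generated by the relations
`xy = q·yx`, `xθ = q·θx`, `yθ = q²·θy`, `y³ = 0`, `θ³ = 0`;
`∂x·x = 1 + q·x·∂x + (q−1)·θ·∂θ`, `∂x·y = q²·y·∂x`, `∂x·θ = θ·∂x`,
`∂y·x = q²·x·∂y`, `∂y·θ = q²·θ·∂y`, `∂y·y = 1 + q·y·∂y + (q−1)(x·∂x + θ·∂θ)`,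
`∂θ·x = q·x·∂θ`, `∂θ·y = q²·y·∂θ`, `∂θ·θ = 1 + q·θ·∂θ`;
`∂x·∂y = q²·∂y·∂x`, `∂y·∂θ = q·∂θ·∂y`, `∂θ·∂x = ∂x·∂θ`, `(∂θ)³ = 0`.
-/

noncomputable section

inductive Gen : Type
  | x | y | th | px | py | pth

abbrev FA : Type := FreeAlgebra ℂ Gen

def Xf : FA := FreeAlgebra.ι ℂ Gen.x
def Yf : FA := FreeAlgebra.ι ℂ Gen.y
def Tf : FA := FreeAlgebra.ι ℂ Gen.th
def PXf : FA := FreeAlgebra.ι ℂ Gen.px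
def PYf : FA := FreeAlgebra.ι ℂ Gen.py
def PTf : FA := FreeAlgebra.ι ℂ Gen.pth

/-- The defining relations of the Z₃-graded quantum Weyl superalgebra. -/
inductive QRel (q : ℂ) : FA → FA → Prop
  | xy : QRel q (Xf * Yf) (q • (Yf * Xf))
  | xth : QRel q (Xf * Tf) (q • (Tf * Xf))
  | yth : QRel q (Yf * Tf) ((q ^ 2) • (Tf * Yf))
  | ycube : QRel q (Yf ^ 3) 0
  | thcube : QRel q (Tf ^ 3) 0
  | pxx : QRel q (PXf * Xf) (1 + q • (Xf * PXf) + (q - 1) • (Tf * PTf))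
  | pxy : QRel q (PXf * Yf) ((q ^ 2) • (Yf * PXf))
  | pxth : QRel q (PXf * Tf) (Tf * PXf)
  | pyx : QRel q (PYf * Xf) ((q ^ 2) • (Xf * PYf))
  | pyth : QRel q (PYf * Tf) ((q ^ 2) • (Tf * PYf))
  | pyy : QRel q (PYf * Yf) (1 + q • (Yf * PYf) + (q - 1) • (Xf * PXf + Tf * PTf))
  | pthx : QRel q (PTf * Xf) (q • (Xf * PTf))
  | pthy : QRel q (PTf * Yf) ((q ^ 2) • (Yf * PTf))
  | pthth : QRel q (PTf * Tf) (1 + q • (Tf * PTf))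
  | pxpy : QRel q (PXf * PYf) ((q ^ 2) • (PYf * PXf))
  | pypth : QRel q (PYf * PTf) (q • (PTf * PYf))
  | pthpx : QRel q (PTf * PXf) (PXf * PTf)
  | pthcube : QRel q (PTf ^ 3) 0

/-- The Z₃-graded quantum Weyl superalgebra `W_q(2|1)`. -/
abbrev Wsp (q : ℂ) : Type := RingQuot (QRel q)

def Xg (q : ℂ) : Wsp q := RingQuot.mkAlgHom ℂ (QRel q) Xf
def Yg (q : ℂ) : Wsp q := RingQuot.mkAlgHom ℂ (QRel q) Yf
def Tg (q : ℂ) : Wsp q := RingQuot.mkAlgHom ℂ (QRel q) Tf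
def PXg (q : ℂ) : Wsp q := RingQuot.mkAlgHom ℂ (QRel q) PXf
def PYg (q : ℂ) : Wsp q := RingQuot.mkAlgHom ℂ (QRel q) PYf
def PTg (q : ℂ) : Wsp q := RingQuot.mkAlgHom ℂ (QRel q) PTf

/-- The R̂-matrix associated with `ℝ_q(2|1)`: rows indexed by `(i,j)`, columns by
`(k,l)`, with indices `0,1,2` standing for `1,2,3`. -/
def Rhat (q : ℂ) (i j k l : Fin 3) : ℂ :=
  if i = 0 ∧ j = 0 ∧ k = 0 ∧ l = 0 then 1
  else if i = 0 ∧ j = 1 ∧ k = 1 ∧ l = 0 then q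
  else if i = 0 ∧ j = 2 ∧ k = 0 ∧ l = 2 then 1 - q ^ 2
  else if i = 0 ∧ j = 2 ∧ k = 2 ∧ l = 0 then 1
  else if i = 1 ∧ j = 0 ∧ k = 0 ∧ l = 1 then q
  else if i = 1 ∧ j = 0 ∧ k = 1 ∧ l = 0 then 1 - q ^ 2
  else if i = 1 ∧ j = 1 ∧ k = 1 ∧ l = 1 then 1
  else if i = 1 ∧ j = 2 ∧ k = 1 ∧ l = 2 then 1 - q ^ 2
  else if i = 1 ∧ j = 2 ∧ k = 2 ∧ l = 1 then q
  else if i = 2 ∧ j = 0 ∧ k = 0 ∧ l = 2 then q ^ 2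
  else if i = 2 ∧ j = 1 ∧ k = 1 ∧ l = 2 then q
  else if i = 2 ∧ j = 2 ∧ k = 2 ∧ l = 2 then 1
  else 0

/-- The coordinates `X₁ = x`, `X₂ = y`, `X₃ = θ`. -/
def Xv (q : ℂ) : Fin 3 → Wsp q := ![Xg q, Yg q, Tg q]

/-- The partial derivatives `∂₁ = ∂x`, `∂₂ = ∂y`, `∂₃ = ∂θ`. -/
def Pv (q : ℂ) : Fin 3 → Wsp q := ![PXg q, PYg q, PTg q]

/-!
In the order `y < x < θ`, the matrix `R̂` is a weighted flip plus `1 - q²` times the projection onto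
the strictly increasing pairs. Contracting the flip in (a) gives the `q`-commutation of `∂_i` past
`X_j`, and the projection survives only for `i = j`, where `q (1 - q²) = q - 1` produces the terms
`(q - 1) X_k ∂_k` with `k > i`. In (b) the flip gives the `q`-commutation of an increasing pair of
derivatives; for a decreasing pair it contributes `q² ∂_i ∂_j`, because opposite flip weights
multiply to `q²`, and the projection supplies the missing `(1 - q²) ∂_i ∂_j`.
-/

namespace Rhat

/-- The position of an index in the order `2 < 1 < 3`, that is `y < x < θ`, for which the diagonal
part of `R̂` is supported on strictly increasing pairs. -/
def rank : Fin 3 → ℕ := ![1, 0, 2]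

/-- The weights `R̂^{ij}_{ji}` of the flip part of `R̂`. -/
def flipWeight (q : ℂ) : Matrix (Fin 3) (Fin 3) ℂ :=
  !![1, q, 1;
     q, 1, q;
     q ^ 2, q, 1]

theorem eq_flip_add_diagonal (q : ℂ) (i j k l : Fin 3) :
    Rhat q i j k l =
      (if k = j ∧ l = i then flipWeight q i j else 0) +
        (if k = i ∧ l = j ∧ rank i < rank j then 1 - q ^ 2 else 0) := by
  fin_cases i <;> fin_cases j <;> fin_cases k <;> fin_cases l <;> simp [Rhat, flipWeight, rank]

theorem flipWeight_self (q : ℂ) (i : Fin 3) : flipWeight q i i = 1 := by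
  fin_cases i <;> rfl

theorem flipWeight_mul_flipWeight_swap (q : ℂ) {i j : Fin 3} (hij : i ≠ j) :
    flipWeight q i j * flipWeight q j i = q ^ 2 := by
  fin_cases i <;> fin_cases j <;> simp [flipWeight, sq] at hij ⊢

theorem rank_injective : Function.Injective rank := by
  decide

section Contraction

variable {E : Type*} [AddCommMonoid E] [Module ℂ E] (q : ℂ) (i j : Fin 3) (f : Fin 3 → Fin 3 → E)

theorem sum_second_indices_smul :
    ∑ k, ∑ l, Rhat q j k i l • f k l =
      flipWeight q j i • f i j +
        if i = j then (1 - q ^ 2) • ∑ k with rank i < rank k, f k k else 0 := by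
  rcases eq_or_ne i j with rfl | hij
  · simp [eq_flip_add_diagonal, add_smul, Finset.sum_add_distrib, ite_and, Finset.sum_filter,
      Finset.smul_sum]
  · simp [eq_flip_add_diagonal, ite_and, hij]

theorem sum_row_indices_smul :
    ∑ k, ∑ l, Rhat q l k j i • f k l =
      flipWeight q i j • f j i + if rank j < rank i then (1 - q ^ 2) • f i j else 0 := by
  simp [eq_flip_add_diagonal, add_smul, Finset.sum_add_distrib, ite_and]

end Contraction

end Rhat

namespace Wsp

open Rhat (rank flipWeight)

variable (q : ℂ)

theorem PXg_mul_Xg : PXg q * Xg q = 1 + q • (Xg q * PXg q) + (q - 1) • (Tg q * PTg q) := by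
  simpa [Xg, Tg, PXg, PTg] using RingQuot.mkAlgHom_rel ℂ (QRel.pxx (q := q))

theorem PXg_mul_Yg : PXg q * Yg q = q ^ 2 • (Yg q * PXg q) := by
  simpa [Yg, PXg] using RingQuot.mkAlgHom_rel ℂ (QRel.pxy (q := q))

theorem PXg_mul_Tg : PXg q * Tg q = Tg q * PXg q := by
  simpa [Tg, PXg] using RingQuot.mkAlgHom_rel ℂ (QRel.pxth (q := q))

theorem PYg_mul_Xg : PYg q * Xg q = q ^ 2 • (Xg q * PYg q) := by
  simpa [Xg, PYg] using RingQuot.mkAlgHom_rel ℂ (QRel.pyx (q := q))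

theorem PYg_mul_Yg :
    PYg q * Yg q = 1 + q • (Yg q * PYg q) + (q - 1) • (Xg q * PXg q + Tg q * PTg q) := by
  simpa [Xg, Yg, Tg, PXg, PYg, PTg] using RingQuot.mkAlgHom_rel ℂ (QRel.pyy (q := q))

theorem PYg_mul_Tg : PYg q * Tg q = q ^ 2 • (Tg q * PYg q) := by
  simpa [Tg, PYg] using RingQuot.mkAlgHom_rel ℂ (QRel.pyth (q := q))

theorem PTg_mul_Xg : PTg q * Xg q = q • (Xg q * PTg q) := by
  simpa [Xg, PTg] using RingQuot.mkAlgHom_rel ℂ (QRel.pthx (q := q))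

theorem PTg_mul_Yg : PTg q * Yg q = q ^ 2 • (Yg q * PTg q) := by
  simpa [Yg, PTg] using RingQuot.mkAlgHom_rel ℂ (QRel.pthy (q := q))

theorem PTg_mul_Tg : PTg q * Tg q = 1 + q • (Tg q * PTg q) := by
  simpa [Tg, PTg] using RingQuot.mkAlgHom_rel ℂ (QRel.pthth (q := q))

theorem PXg_mul_PYg : PXg q * PYg q = q ^ 2 • (PYg q * PXg q) := by
  simpa [PXg, PYg] using RingQuot.mkAlgHom_rel ℂ (QRel.pxpy (q := q))

theorem PYg_mul_PTg : PYg q * PTg q = q • (PTg q * PYg q) := by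
  simpa [PYg, PTg] using RingQuot.mkAlgHom_rel ℂ (QRel.pypth (q := q))

theorem PTg_mul_PXg : PTg q * PXg q = PXg q * PTg q := by
  simpa [PXg, PTg] using RingQuot.mkAlgHom_rel ℂ (QRel.pthpx (q := q))

theorem Pv_mul_Xv_self (i : Fin 3) :
    Pv q i * Xv q i =
      1 + q • (Xv q i * Pv q i) + (q - 1) • ∑ k with rank i < rank k, Xv q k * Pv q k := by
  rw [Finset.sum_filter, Fin.sum_univ_three]
  fin_cases i <;> simp [rank, Xv, Pv, PXg_mul_Xg, PYg_mul_Yg, PTg_mul_Tg]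

variable {q} {i j : Fin 3}

theorem Pv_mul_Xv_of_ne (hq3 : q ^ 3 = 1) (hij : i ≠ j) :
    Pv q i * Xv q j = (q * flipWeight q j i) • (Xv q j * Pv q i) := by
  have hq : q * q ^ 2 = 1 := by rw [← pow_succ', hq3]
  fin_cases i <;> fin_cases j <;>
    simp [flipWeight, Xv, Pv, hq, ← sq, PXg_mul_Yg, PXg_mul_Tg, PYg_mul_Xg, PYg_mul_Tg,
      PTg_mul_Xg, PTg_mul_Yg] at hij ⊢

theorem Pv_mul_Pv_of_rank_lt (hq3 : q ^ 3 = 1) (hij : rank i < rank j) :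
    Pv q i * Pv q j = flipWeight q i j • (Pv q j * Pv q i) := by
  have hq : q * q ^ 2 = 1 := by rw [← pow_succ', hq3]
  fin_cases i <;> fin_cases j <;>
    simp [flipWeight, rank, Pv, smul_smul, hq, PXg_mul_PYg, PYg_mul_PTg, PTg_mul_PXg] at hij ⊢

theorem flipWeight_smul_Pv_mul_Pv_of_rank_lt (hq3 : q ^ 3 = 1) (hji : rank j < rank i) :
    flipWeight q i j • (Pv q j * Pv q i) = q ^ 2 • (Pv q i * Pv q j) := by
  have hij : i ≠ j := fun h => hji.ne' (congrArg rank h)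
  rw [Pv_mul_Pv_of_rank_lt hq3 hji, smul_smul, Rhat.flipWeight_mul_flipWeight_swap q hij]

theorem Pv_mul_Xv (hq3 : q ^ 3 = 1) (i j : Fin 3) :
    Pv q i * Xv q j =
      (if i = j then 1 else 0) + q • (flipWeight q j i • (Xv q j * Pv q i) +
        if i = j then (1 - q ^ 2) • ∑ k with rank i < rank k, Xv q k * Pv q k else 0) := by
  rcases eq_or_ne i j with rfl | hij
  · have hq : q * (1 - q ^ 2) = q - 1 := by rw [mul_sub, mul_one, ← pow_succ', hq3]
    simp only [if_true, Rhat.flipWeight_self, one_smul, smul_add, smul_smul, hq, ← add_assoc,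
      Pv_mul_Xv_self]
  · simp only [if_neg hij, zero_add, add_zero, smul_smul, Pv_mul_Xv_of_ne hq3 hij]

theorem Pv_mul_Pv (hq3 : q ^ 3 = 1) (i j : Fin 3) :
    Pv q i * Pv q j =
      flipWeight q i j • (Pv q j * Pv q i) +
        if rank j < rank i then (1 - q ^ 2) • (Pv q i * Pv q j) else 0 := by
  rcases lt_trichotomy (rank i) (rank j) with hlt | heq | hgt
  · rw [if_neg hlt.not_gt, add_zero, Pv_mul_Pv_of_rank_lt hq3 hlt]
  · obtain rfl := Rhat.rank_injective heq
    rw [if_neg (lt_irrefl _), add_zero, Rhat.flipWeight_self, one_smul]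
  · rw [if_pos hgt, flipWeight_smul_Pv_mul_Pv_of_rank_lt hq3 hgt, ← add_smul,
      add_sub_cancel, one_smul]

end Wsp

/-- In `W_q(2|1)`: (a) `∂_i·X_j = δ_{ij} + q·Σ_{k,l} R̂^{jk}_{il}·X_l·∂_k`, and
(b) `∂_i·∂_j = Σ_{k,l} R̂^{lk}_{ji}·∂_k·∂_l`. -/
theorem weyl_Rhat_relations (q : ℂ) (hq3 : q ^ 3 = 1) (hq1 : q ≠ 1) :
    ∀ i j : Fin 3,
      (Pv q i * Xv q j =
        (if i = j then (1 : Wsp q) else 0) +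
          q • ∑ k : Fin 3, ∑ l : Fin 3, Rhat q j k i l • (Xv q l * Pv q k)) ∧
      (Pv q i * Pv q j =
        ∑ k : Fin 3, ∑ l : Fin 3, Rhat q l k j i • (Pv q k * Pv q l)) := by
  intro i j
  rw [Rhat.sum_second_indices_smul q i j fun k l => Xv q l * Pv q k,
    Rhat.sum_row_indices_smul q i j fun k l => Pv q k * Pv q l]
  exact ⟨Wsp.Pv_mul_Xv hq3 i j, Wsp.Pv_mul_Pv hq3 i j⟩
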